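/- arXiv:2304.14821 — 2 statements merged into one kernel-verified Lean document; each statement's English description precedes it below -/
import Mathlib

section
/- Let < be a strict total order on A. For each mem-basic form P over A there is a unique CL-basic form Q such that CP_cl ⊢ P = Q. -/
/-!
Interpret an expression in three-valued logic: a valuation assigns `true`, `false` or "undefined"
to each atom, and `P ◁ Q ▷ R` is undefined as soon as `Q` is. All axioms of CP_cl are sound for
this semantics (`DerCl.sound`).

*Semantic reading of the shared alphabet* (`mem_sha_iff`): for a mem-basic form `P`, an atom `a`
lies in `α̃(P)` iff `P` is undefined whenever `a` is the only undefined atom. Hence derivably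
equal mem-basic forms have the same shared alphabet.

*Uniqueness.* Two semantically equal CL-basic forms have the same shared alphabet, so they are
`F_σ(P_i)` and `F_σ(Q_i)` for the same `σ`. As atoms of `σ` do not occur below, `P_i` and `Q_i` are
semantically equal too, and induction applies; when `σ` is empty the forms are constants.

*Existence.* By (CL2), any `a ∈ α̃(P)` can be moved to the root of `P` (`exists_root`). Since the
shared alphabet is semantic, the remaining shared atoms are still shared by both branches, so the
process continues through the enumeration `σ` of `α̃(P)` and yields `P = F_σ(P_i)`
(`exists_Fseq`), where each `P_i` has fewer atoms; induct on the number of atoms.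
-/

/-- Conditional expressions over a set `A` of atoms: constants T, F, atoms, and the
ternary conditional `cond P Q R` read `P ◁ Q ▷ R` ("if Q then P else R"). -/
inductive Expr (A : Type) : Type
  | T : Expr A
  | F : Expr A
  | atom : A → Expr A
  | cond : Expr A → Expr A → Expr A → Expr A

namespace Expr

/-- Derivability from the axiom system CP_cl = CP + (CPmem) + (CL2). -/
inductive DerCl {A : Type} : Expr A → Expr A → Prop
  | refl (P : Expr A) : DerCl P P
  | symm {P Q : Expr A} : DerCl P Q → DerCl Q P
  | trans {P Q R : Expr A} : DerCl P Q → DerCl Q R → DerCl P R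
  | congr {P P' Q Q' R R' : Expr A} :
      DerCl P P' → DerCl Q Q' → DerCl R R' →
      DerCl (cond P Q R) (cond P' Q' R')
  | cp1 (x y : Expr A) : DerCl (cond x T y) x
  | cp2 (x y : Expr A) : DerCl (cond x F y) y
  | cp3 (x : Expr A) : DerCl (cond T x F) x
  | cp4 (x y z u v : Expr A) :
      DerCl (cond x (cond y z u) v) (cond (cond x y v) z (cond x u v))
  | cpmem (x y z u v w : Expr A) :
      DerCl (cond x y (cond z u (cond v y w))) (cond x y (cond z u w))
  | cl2 (x y z u v w : Expr A) :
      DerCl (cond (cond x y z) u (cond v y w)) (cond (cond x u v) y (cond z u w))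

/-- The set of atoms occurring in a conditional expression. -/
def atoms {A : Type} [DecidableEq A] : Expr A → Finset A
  | T => ∅
  | F => ∅
  | atom a => {a}
  | cond P Q R => atoms P ∪ atoms Q ∪ atoms R

/-- Mem-basic forms. -/
inductive IsMBF {A : Type} [DecidableEq A] : Expr A → Prop
  | T : IsMBF T
  | F : IsMBF F
  | cond {P Q : Expr A} (a : A) : IsMBF P → IsMBF Q →
      a ∉ atoms P → a ∉ atoms Q → IsMBF (cond P (atom a) Q)

/-- The shared alphabet α̃ of a basic form. -/
def sha {A : Type} [DecidableEq A] : Expr A → Finset A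
  | cond P (atom a) Q => insert a (sha P ∩ sha Q)
  | _ => ∅

/-- `Fseq σ P` is the basic form F_σ(P_0, …, P_{2^{|σ|}−1}):
F_ε(P_0) = P_0 and F_{aρ}(P_0,…) = F_ρ(P_0,…,P_{2^{|ρ|}−1}) ◁ a ▷ F_ρ(P_{2^{|ρ|}},…). -/
def Fseq {A : Type} : (σ : List A) → (Fin (2 ^ σ.length) → Expr A) → Expr A
  | [], P => P ⟨0, by positivity⟩
  | a :: ρ, P =>
      cond (Fseq ρ (fun i => P ⟨i.1, by have := i.2; simp [Nat.pow_succ]; omega⟩))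
        (atom a)
        (Fseq ρ (fun i => P ⟨2 ^ ρ.length + i.1, by have := i.2; simp [Nat.pow_succ]; omega⟩))

/-- CL-basic forms (relative to the ordering of A): T and F are CL-basic forms, and a
mem-basic form P is a CL-basic form if, for σ the enumeration of α̃(P) in increasing
order, P = F_σ(P_0, …, P_{2^{|σ|}−1}) where each P_i is a CL-basic form. -/
inductive IsCbf {A : Type} [LinearOrder A] : Expr A → Prop
  | T : IsCbf T
  | F : IsCbf F
  | node {P : Expr A} (hm : IsMBF P)
      (Ps : Fin (2 ^ ((sha P).sort (· ≤ ·)).length) → Expr A)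
      (hP : P = Fseq ((sha P).sort (· ≤ ·)) Ps)
      (hC : ∀ i, IsCbf (Ps i)) : IsCbf P

end Expr

namespace Expr

variable {A : Type}

/-! ### Three-valued semantics and soundness -/

/-- Three-valued evaluation; `none` is the undefined truth value, and a conditional whose
condition is undefined is undefined. -/
def eval (v : A → Option Bool) : Expr A → Option Bool
  | T => some true
  | F => some false
  | atom a => v a
  | cond P Q R =>
    match eval v Q with
    | none => none
    | some true => eval v P
    | some false => eval v R

theorem DerCl.sound {P Q : Expr A} (h : DerCl P Q) (v : A → Option Bool) :
    eval v P = eval v Q := by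
  induction h with
  | refl => rfl
  | symm _ ih => exact ih.symm
  | trans _ _ h1 h2 => exact h1.trans h2
  | congr _ _ _ h1 h2 h3 => simp only [eval, h1, h2, h3]
  | cp1 => rfl
  | cp2 => rfl
  | cp3 x => rcases h : eval v x with _ | _ | _ <;> simp [eval, h]
  | cp4 x y z u w => rcases h : eval v z with _ | _ | _ <;> simp [eval, h]
  | cpmem x y z u w t =>
    rcases h : eval v y with _ | _ | _ <;> rcases h' : eval v u with _ | _ | _ <;>
      simp [eval, h, h']
  | cl2 x y z u w t =>
    rcases h : eval v y with _ | _ | _ <;> rcases h' : eval v u with _ | _ | _ <;>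
      simp [eval, h, h']

theorem Fseq_congr (σ : List A) {Ps Qs : Fin (2 ^ σ.length) → Expr A}
    (h : ∀ i, DerCl (Ps i) (Qs i)) : DerCl (Fseq σ Ps) (Fseq σ Qs) := by
  induction σ with
  | nil => exact h _
  | cons a ρ ih => exact .congr (ih fun i => h _) (.refl _) (ih fun i => h _)

section

variable [DecidableEq A]

theorem eval_congr {v w : A → Option Bool} (P : Expr A) (h : ∀ a ∈ atoms P, v a = w a) :
    eval v P = eval w P := by
  induction P with
  | T => rfl
  | F => rfl
  | atom a => exact h a (by simp [atoms])
  | cond P Q R h1 h2 h3 =>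
    simp only [eval]
    rw [h1 fun a ha => h a (by simp [atoms, ha]), h2 fun a ha => h a (by simp [atoms, ha]),
      h3 fun a ha => h a (by simp [atoms, ha])]

theorem eval_update {v : A → Option Bool} {P : Expr A} {a : A} (ha : a ∉ atoms P)
    (t : Option Bool) : eval (Function.update v a t) P = eval v P :=
  eval_congr P fun b hb => Function.update_of_ne (by rintro rfl; exact ha hb) _ _

theorem eval_left {v : A → Option Bool} {P Q : Expr A} {a : A} (ha : a ∉ atoms P) :
    eval (Function.update v a (some true)) (cond P (atom a) Q) = eval v P := by
  simp [eval, eval_update ha]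

theorem eval_right {v : A → Option Bool} {P Q : Expr A} {a : A} (ha : a ∉ atoms Q) :
    eval (Function.update v a (some false)) (cond P (atom a) Q) = eval v Q := by
  simp [eval, eval_update ha]

/-! ### The shared alphabet is semantic -/

theorem mem_sha_iff {P : Expr A} (hP : IsMBF P) (a : A) :
    a ∈ sha P ↔ ∀ v : A → Option Bool, v a = none → (∀ b, b ≠ a → v b ≠ none) →
      eval v P = none := by
  induction hP with
  | T =>
    simp only [sha, Finset.notMem_empty, false_iff]
    intro h
    have := h (Function.update (fun _ => some true) a none) (by simp)
      (fun b hb => by simp [Function.update_of_ne hb])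
    simp [eval] at this
  | F =>
    simp only [sha, Finset.notMem_empty, false_iff]
    intro h
    have := h (Function.update (fun _ => some true) a none) (by simp)
      (fun b hb => by simp [Function.update_of_ne hb])
    simp [eval] at this
  | @cond P Q b _ _ hbP hbQ ihP ihQ =>
    simp only [sha, Finset.mem_insert, Finset.mem_inter]
    by_cases hab : a = b
    · subst hab
      simp only [true_or, true_iff]
      intro v hv _
      simp [eval, hv]
    · simp only [hab, false_or]
      -- `b` does not occur in the branches, so its value can be used to select a branch
      have key : ∀ (v : A → Option Bool) (t : Bool), v a = none → (∀ c, c ≠ a → v c ≠ none) →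
          Function.update v b (some t) a = none ∧
            ∀ c, c ≠ a → Function.update v b (some t) c ≠ none := by
        intro v t h1 h2
        refine ⟨by rw [Function.update_of_ne hab, h1], fun c hc => ?_⟩
        by_cases hcb : c = b
        · subst hcb; simp
        · rw [Function.update_of_ne hcb]; exact h2 c hc
      constructor
      · rintro ⟨h1, h2⟩ v hv hv'
        have h1' := ihP.1 h1 v hv hv'
        have h2' := ihQ.1 h2 v hv hv'
        rcases h : v b with _ | _ | _ <;> simp [eval, h, h1', h2']
      · intro h
        refine ⟨ihP.2 fun v hv hv' => ?_, ihQ.2 fun v hv hv' => ?_⟩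
        · rw [← eval_left (Q := Q) hbP]
          exact h _ (key v true hv hv').1 (key v true hv hv').2
        · rw [← eval_right (P := P) hbQ]
          exact h _ (key v false hv hv').1 (key v false hv hv').2

theorem sha_eq_of_eval {P Q : Expr A} (hP : IsMBF P) (hQ : IsMBF Q)
    (h : ∀ v, eval v P = eval v Q) : sha P = sha Q := by
  ext a
  rw [mem_sha_iff hP, mem_sha_iff hQ]
  simp only [h]

theorem sha_subset_atoms {P : Expr A} (hP : IsMBF P) : sha P ⊆ atoms P := by
  induction hP with
  | T => simp [sha]
  | F => simp [sha]
  | @cond P Q b _ _ _ _ ihP ihQ =>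
    intro a ha
    simp only [sha, atoms, Finset.mem_insert, Finset.mem_inter, Finset.mem_union,
      Finset.mem_singleton] at ha ⊢
    rcases ha with h | h
    · exact Or.inl (Or.inr h)
    · exact Or.inr (ihQ h.2)

theorem eq_const_of_sha {P : Expr A} (hP : IsMBF P) (h : sha P = ∅) : P = T ∨ P = F := by
  cases hP with
  | T => exact Or.inl rfl
  | F => exact Or.inr rfl
  | cond => simp [sha] at h

/-! ### Moving shared atoms to the top -/

/-- A shared atom can be moved to the root: this is where (CL2) enters. -/
theorem exists_root {P : Expr A} (hP : IsMBF P) {a : A} (ha : a ∈ sha P) :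
    ∃ P₁ P₂, IsMBF P₁ ∧ IsMBF P₂ ∧ atoms P₁ ⊆ atoms P \ {a} ∧ atoms P₂ ⊆ atoms P \ {a} ∧
      DerCl P (cond P₁ (atom a) P₂) := by
  induction hP with
  | T => simp [sha] at ha
  | F => simp [sha] at ha
  | @cond P Q b hP hQ hbP hbQ ihP ihQ =>
    by_cases hab : a = b
    · subst hab
      refine ⟨P, Q, hP, hQ, ?_, ?_, DerCl.refl _⟩ <;>
      · intro c hc
        have : c ≠ a := by rintro rfl; contradiction
        simp [atoms, hc, this]
    · simp only [sha, Finset.mem_insert, hab, false_or, Finset.mem_inter] at ha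
      obtain ⟨P₁, P₂, hP₁, hP₂, sP₁, sP₂, dP⟩ := ihP ha.1
      obtain ⟨Q₁, Q₂, hQ₁, hQ₂, sQ₁, sQ₂, dQ⟩ := ihQ ha.2
      simp only [Finset.subset_iff, Finset.mem_sdiff, Finset.mem_singleton] at sP₁ sP₂ sQ₁ sQ₂
      refine ⟨cond P₁ (atom b) Q₁, cond P₂ (atom b) Q₂,
        .cond b hP₁ hQ₁ (fun h => hbP (sP₁ h).1) (fun h => hbQ (sQ₁ h).1),
        .cond b hP₂ hQ₂ (fun h => hbP (sP₂ h).1) (fun h => hbQ (sQ₂ h).1), ?_, ?_,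
        (DerCl.congr dP (.refl _) dQ).trans (.cl2 _ _ _ _ _ _)⟩
      · intro c hc
        simp only [atoms, Finset.mem_union, Finset.mem_singleton, Finset.mem_sdiff] at hc ⊢
        grind
      · intro c hc
        simp only [atoms, Finset.mem_union, Finset.mem_singleton, Finset.mem_sdiff] at hc ⊢
        grind

/-- Shared atoms can be moved to the top of the form, in any prescribed order. -/
theorem exists_Fseq (σ : List A) (hσ : σ.Nodup) {P : Expr A} (hP : IsMBF P)
    (h : ∀ a ∈ σ, a ∈ sha P) :
    ∃ Ps : Fin (2 ^ σ.length) → Expr A, DerCl P (Fseq σ Ps) ∧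
      ∀ i, IsMBF (Ps i) ∧ atoms (Ps i) ⊆ atoms P \ σ.toFinset := by
  induction σ generalizing P with
  | nil => exact ⟨fun _ => P, .refl _, fun i => ⟨hP, by simp⟩⟩
  | cons a ρ ih =>
    obtain ⟨haρ, hρ⟩ := List.nodup_cons.1 hσ
    obtain ⟨P₁, P₂, hP₁, hP₂, s₁, s₂, d⟩ := exists_root hP (h a (by simp))
    have ha₁ : a ∉ atoms P₁ := fun h => by simpa using s₁ h
    have ha₂ : a ∉ atoms P₂ := fun h => by simpa using s₂ h
    have hsha := sha_eq_of_eval hP (.cond a hP₁ hP₂ ha₁ ha₂) d.sound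
    have hmem : ∀ b ∈ ρ, b ∈ sha P₁ ∧ b ∈ sha P₂ := by
      intro b hb
      have hb' := h b (by simp [hb])
      have hne : b ≠ a := by rintro rfl; contradiction
      simpa [hsha, sha, hne] using hb'
    obtain ⟨Ps, dP, hPs⟩ := ih hρ hP₁ fun b hb => (hmem b hb).1
    obtain ⟨Qs, dQ, hQs⟩ := ih hρ hP₂ fun b hb => (hmem b hb).2
    refine ⟨fun i => if hi : i.1 < 2 ^ ρ.length then Ps ⟨i.1, hi⟩ else
      Qs ⟨i.1 - 2 ^ ρ.length, by
        have := i.2; simp only [List.length_cons, Nat.pow_succ] at this; omega⟩, ?_, ?_⟩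
    · refine d.trans ?_
      simpa [Fseq] using DerCl.congr dP (.refl (atom a)) dQ
    · intro i
      dsimp only
      split_ifs with hi
      · refine ⟨(hPs _).1, fun c hc => ?_⟩
        have h1 := (hPs _).2 hc
        simp only [Finset.mem_sdiff, List.mem_toFinset] at h1
        have h2 := s₁ h1.1
        simp only [Finset.mem_sdiff, Finset.mem_singleton] at h2
        simp [h1, h2]
      · refine ⟨(hQs _).1, fun c hc => ?_⟩
        have h1 := (hQs _).2 hc
        simp only [Finset.mem_sdiff, List.mem_toFinset] at h1
        have h2 := s₂ h1.1
        simp only [Finset.mem_sdiff, Finset.mem_singleton] at h2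
        simp [h1, h2]

theorem atoms_Fseq_subset (σ : List A) {Ps : Fin (2 ^ σ.length) → Expr A} {X : Finset A}
    (hσ : ∀ a ∈ σ, a ∈ X) (h : ∀ i, atoms (Ps i) ⊆ X) : atoms (Fseq σ Ps) ⊆ X := by
  induction σ with
  | nil => exact h _
  | cons a ρ ih =>
    simp only [List.mem_cons, forall_eq_or_imp] at hσ
    exact Finset.union_subset (Finset.union_subset (ih hσ.2 fun i => h _)
      (by simpa [atoms] using hσ.1)) (ih hσ.2 fun i => h _)

theorem isMBF_Fseq (σ : List A) (hσ : σ.Nodup) {Ps : Fin (2 ^ σ.length) → Expr A}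
    (h : ∀ i, IsMBF (Ps i)) (hd : ∀ i, ∀ a ∈ σ, a ∉ atoms (Ps i)) : IsMBF (Fseq σ Ps) := by
  induction σ with
  | nil => exact h _
  | cons a ρ ih =>
    obtain ⟨haρ, hρ⟩ := List.nodup_cons.1 hσ
    have key : ∀ Qs : Fin (2 ^ ρ.length) → Expr A, (∀ i, a ∉ atoms (Qs i)) →
        a ∉ atoms (Fseq ρ Qs) := by
      intro Qs hQ hmem
      have := atoms_Fseq_subset ρ (Ps := Qs)
        (X := (ρ.toFinset ∪ Finset.univ.biUnion fun i => atoms (Qs i)))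
        (fun b hb => by simp [hb])
        (fun i b hb => by
          simp only [Finset.mem_union, Finset.mem_biUnion, Finset.mem_univ, true_and]
          exact Or.inr ⟨i, hb⟩) hmem
      simp only [Finset.mem_union, List.mem_toFinset, Finset.mem_biUnion, Finset.mem_univ,
        true_and] at this
      rcases this with h | ⟨i, h⟩
      · exact haρ h
      · exact hQ i h
    exact .cond a (ih hρ (fun i => h _) fun i b hb => hd _ b (by simp [hb]))
      (ih hρ (fun i => h _) fun i b hb => hd _ b (by simp [hb]))
      (key _ fun i => hd _ a (by simp)) (key _ fun i => hd _ a (by simp))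

/-! ### Semantic equality of leaves and of constants -/

/-- Semantic equality of mem-basic forms `F_σ(P_i)` and `F_σ(Q_i)` passes to the leaves. -/
theorem eval_leaf (σ : List A) {Ps Qs : Fin (2 ^ σ.length) → Expr A}
    (hP : IsMBF (Fseq σ Ps)) (hQ : IsMBF (Fseq σ Qs))
    (h : ∀ v, eval v (Fseq σ Ps) = eval v (Fseq σ Qs)) (i : Fin (2 ^ σ.length))
    (v : A → Option Bool) : eval v (Ps i) = eval v (Qs i) := by
  induction σ generalizing v with
  | nil =>
    obtain rfl : i = ⟨0, by positivity⟩ := Fin.ext (Nat.lt_one_iff.1 i.2)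
    exact h v
  | cons a ρ ih =>
    simp only [Fseq] at hP hQ h
    cases hP with | cond _ hP₁ hP₂ aP₁ aP₂ =>
    cases hQ with | cond _ hQ₁ hQ₂ aQ₁ aQ₂ =>
    by_cases hi : i.1 < 2 ^ ρ.length
    · exact ih hP₁ hQ₁ (fun w => by rw [← eval_left aP₁, ← eval_left aQ₁, h]) ⟨i.1, hi⟩ v
    · have hlt : i.1 - 2 ^ ρ.length < 2 ^ ρ.length := by
        have := i.2; simp only [List.length_cons, Nat.pow_succ] at this; omega
      have := ih hP₂ hQ₂ (fun w => by rw [← eval_right aP₂, ← eval_right aQ₂, h])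
        ⟨i.1 - 2 ^ ρ.length, hlt⟩ v
      have e : 2 ^ ρ.length + (i.1 - 2 ^ ρ.length) = i.1 := by omega
      simpa only [e] using this

theorem eq_of_eval_of_sha {P Q : Expr A} (hP : IsMBF P) (hQ : IsMBF Q) (hs : sha P = ∅)
    (h : ∀ v, eval v P = eval v Q) : P = Q := by
  have h0 := h fun _ => none
  rcases eq_const_of_sha hP hs with rfl | rfl <;>
    rcases eq_const_of_sha hQ ((sha_eq_of_eval hP hQ h).symm.trans hs) with rfl | rfl <;>
    simp_all [eval]

end

variable [LinearOrder A]

/-! ### CL-basic forms: uniqueness and existence -/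

theorem IsCbf.isMBF {P : Expr A} (h : IsCbf P) : IsMBF P := by
  cases h with
  | T => exact .T
  | F => exact .F
  | node hm => exact hm

/-- `IsCbf.node` with the enumeration of the shared alphabet as a variable. -/
theorem IsCbf.node' {P : Expr A} {σ : List A} (hm : IsMBF P) (hσ : σ = (sha P).sort (· ≤ ·))
    (Ps : Fin (2 ^ σ.length) → Expr A) (hP : P = Fseq σ Ps) (hC : ∀ i, IsCbf (Ps i)) :
    IsCbf P := by
  subst hσ
  exact .node hm Ps hP hC

theorem IsCbf.exists_of_sort {P : Expr A} {σ : List A} (h : IsCbf P)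
    (hσ : σ = (sha P).sort (· ≤ ·)) :
    ∃ Ps : Fin (2 ^ σ.length) → Expr A, P = Fseq σ Ps ∧ ∀ i, IsCbf (Ps i) := by
  cases h with
  | T =>
    obtain rfl : σ = [] := by simpa [sha] using hσ
    exact ⟨fun _ => Expr.T, rfl, fun _ => .T⟩
  | F =>
    obtain rfl : σ = [] := by simpa [sha] using hσ
    exact ⟨fun _ => Expr.F, rfl, fun _ => .F⟩
  | node _ Ps hP hC =>
    subst hσ
    exact ⟨Ps, hP, hC⟩

theorem IsCbf.eq_of_eval {P Q : Expr A} (hP : IsCbf P) (hQ : IsCbf Q)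
    (h : ∀ v, eval v P = eval v Q) : P = Q := by
  induction hP generalizing Q with
  | T => exact eq_of_eval_of_sha .T hQ.isMBF rfl h
  | F => exact eq_of_eval_of_sha .F hQ.isMBF rfl h
  | @node P hm Ps hPs _ ih =>
    obtain ⟨Qs, hQs, hC⟩ := hQ.exists_of_sort
      (congrArg (fun s => s.sort (· ≤ ·)) (sha_eq_of_eval hm hQ.isMBF h))
    have hmQ := hQ.isMBF
    have hl := eval_leaf ((sha P).sort (· ≤ ·)) (Ps := Ps) (Qs := Qs)
      (hPs ▸ hm) (hQs ▸ hmQ) (fun v => by rw [← hPs, ← hQs, h])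
    have : Ps = Qs := funext fun i => ih i (hC i) (hl i)
    rw [hPs, hQs, this]

/-- Existence, with the control on atoms that the induction needs. -/
theorem exists_cbf (n : ℕ) {P : Expr A} (hP : IsMBF P) (hn : (atoms P).card = n) :
    ∃ Q, IsCbf Q ∧ DerCl P Q ∧ atoms Q ⊆ atoms P := by
  induction n using Nat.strong_induction_on generalizing P with
  | _ n ih =>
    by_cases hs : sha P = ∅
    · rcases eq_const_of_sha hP hs with rfl | rfl
      · exact ⟨_, .T, .refl _, subset_rfl⟩
      · exact ⟨_, .F, .refl _, subset_rfl⟩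
    obtain ⟨σ, hσ⟩ : ∃ σ, σ = (sha P).sort (· ≤ ·) := ⟨_, rfl⟩
    have hnd : σ.Nodup := hσ ▸ Finset.sort_nodup _ _
    have hmem : ∀ a, a ∈ σ ↔ a ∈ sha P := fun a => by simp [hσ]
    obtain ⟨Ps, d, hPs⟩ := exists_Fseq σ hnd hP fun a ha => (hmem a).1 ha
    have hsub : ∀ i, atoms (Ps i) ⊆ atoms P := fun i => (hPs i).2.trans Finset.sdiff_subset
    have hdis : ∀ i, ∀ a ∈ σ, a ∉ atoms (Ps i) := fun i a ha h => by
      have := (hPs i).2 h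
      simp [ha] at this
    have hQ : ∀ i, ∃ Q, IsCbf Q ∧ DerCl (Ps i) Q ∧ atoms Q ⊆ atoms (Ps i) := fun i => by
      refine ih _ ?_ (hPs i).1 rfl
      obtain ⟨a, ha⟩ := Finset.nonempty_iff_ne_empty.2 hs
      rw [← hn]
      exact Finset.card_lt_card (Finset.ssubset_iff_subset_ne.2 ⟨hsub i, fun h =>
        hdis i a ((hmem a).2 ha) (h ▸ sha_subset_atoms hP ha)⟩)
    choose Qs hC hD hA using hQ
    have hm : IsMBF (Fseq σ Qs) := isMBF_Fseq σ hnd (fun i => (hC i).isMBF)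
      fun i a ha h => hdis i a ha (hA i h)
    have hd : DerCl P (Fseq σ Qs) := d.trans (Fseq_congr σ hD)
    refine ⟨Fseq σ Qs, .node' hm ?_ Qs rfl hC, hd, ?_⟩
    · rw [← sha_eq_of_eval hP hm hd.sound, hσ]
    · exact atoms_Fseq_subset σ (fun a ha => sha_subset_atoms hP ((hmem a).1 ha))
        fun i => (hA i).trans (hsub i)

end Expr

open Expr in
/-- For each mem-basic form P over A (with A strictly totally ordered)
there is a unique CL-basic form Q such that CP_cl ⊢ P = Q. -/
theorem stmt_4 {A : Type} [LinearOrder A] (P : Expr A) (hP : IsMBF P) :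
    ∃! Q : Expr A, IsCbf Q ∧ DerCl P Q := by
  obtain ⟨Q, hQ, hd, _⟩ := exists_cbf _ hP rfl
  exact ⟨Q, ⟨hQ, hd⟩, fun R hR => hR.1.eq_of_eval hQ (hR.2.symm.trans hd).sound⟩
end

section
/- Let < be a strict total order on A. For each three-valued mem-basic form P over A, writing σ for the enumeration of α̃(P) in increasing order (so |σ| = |α̃(P)|), there exist three-valued mem-basic forms P_0, …, P_{2^{|σ|}−1} such that CP_cl^U ⊢ P = F_σ(P_0, …, P_{2^{|σ|}−1}). -/
/-!
For a mem-basic form `P` and any finite set `x`, every atom `a` in `shaAux P x` can be pulled to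
the root: `P = ℓ_a P ◁ a ▷ r_a P` (`derClU_expand`). At a leaf `U` this is the derivable identity
`U = U ◁ a ▷ U`, and below a root `b ≠ a` it is (CL2) applied to the expansions of both branches.
Both reductions keep mem-basic forms mem-basic and lose at most `a` from the shared alphabet
(`shaAux_lred`, `shaAux_rred`), so the expansion can be repeated along any repetition-free list
of atoms of `shaAux P x`; the increasing enumeration of `sha P` is one such list.
-/

/-- Three-valued conditional expressions over a set `A` of atoms: constants T, F, U,
atoms, and the ternary conditional `cond P Q R` read `P ◁ Q ▷ R` ("if Q then P else R"). -/
inductive ExprU (A : Type) : Type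
  | T : ExprU A
  | F : ExprU A
  | U : ExprU A
  | atom : A → ExprU A
  | cond : ExprU A → ExprU A → ExprU A → ExprU A

namespace ExprU

/-- Derivability from the axiom system CP_cl^U = CP + (CPmem) + (CL2) + (CP-U). -/
inductive DerClU {A : Type} : ExprU A → ExprU A → Prop
  | refl (P : ExprU A) : DerClU P P
  | symm {P Q : ExprU A} : DerClU P Q → DerClU Q P
  | trans {P Q R : ExprU A} : DerClU P Q → DerClU Q R → DerClU P R
  | congr {P P' Q Q' R R' : ExprU A} :
      DerClU P P' → DerClU Q Q' → DerClU R R' →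
      DerClU (cond P Q R) (cond P' Q' R')
  | cp1 (x y : ExprU A) : DerClU (cond x T y) x
  | cp2 (x y : ExprU A) : DerClU (cond x F y) y
  | cp3 (x : ExprU A) : DerClU (cond T x F) x
  | cp4 (x y z u v : ExprU A) :
      DerClU (cond x (cond y z u) v) (cond (cond x y v) z (cond x u v))
  | cpmem (x y z u v w : ExprU A) :
      DerClU (cond x y (cond z u (cond v y w))) (cond x y (cond z u w))
  | cl2 (x y z u v w : ExprU A) :
      DerClU (cond (cond x y z) u (cond v y w)) (cond (cond x u v) y (cond z u w))
  | cpu (x y : ExprU A) : DerClU (cond x U y) U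

/-- The set α(P) of atoms occurring in a conditional expression. -/
def atoms {A : Type} [DecidableEq A] : ExprU A → Finset A
  | T => ∅
  | F => ∅
  | U => ∅
  | atom a => {a}
  | cond P Q R => atoms P ∪ atoms Q ∪ atoms R

/-- Three-valued mem-basic forms. -/
inductive IsMBF {A : Type} [DecidableEq A] : ExprU A → Prop
  | T : IsMBF T
  | F : IsMBF F
  | U : IsMBF U
  | cond {P Q : ExprU A} (a : A) : IsMBF P → IsMBF Q →
      a ∉ atoms P → a ∉ atoms Q → IsMBF (cond P (atom a) Q)

/-- The auxiliary function f for the three-valued shared alphabet: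
f(U, x) = x, f(T, x) = f(F, x) = ∅,
f(P₁ ◁ a ▷ P₂, x) = {a} ∪ (f(P₁, x \ {a}) ∩ f(P₂, x \ {a})). -/
def shaAux {A : Type} [DecidableEq A] : ExprU A → Finset A → Finset A
  | cond P (atom a) Q, x => insert a (shaAux P (x.erase a) ∩ shaAux Q (x.erase a))
  | U, x => x
  | _, _ => ∅

/-- The shared alphabet α̃(P) = f(P, α(P)) of a three-valued mem-basic form. -/
def sha {A : Type} [DecidableEq A] (P : ExprU A) : Finset A :=
  shaAux P (atoms P)

/-- Left a-reduction ℓ_a on basic forms. -/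
def lred {A : Type} [DecidableEq A] (a : A) : ExprU A → ExprU A
  | cond P (atom b) Q => if b = a then P else cond (lred a P) (atom b) (lred a Q)
  | e => e

/-- Right a-reduction r_a on basic forms. -/
def rred {A : Type} [DecidableEq A] (a : A) : ExprU A → ExprU A
  | cond P (atom b) Q => if b = a then Q else cond (rred a P) (atom b) (rred a Q)
  | e => e

/-- `Fseq σ P` is the basic form F_σ(P_0, …, P_{2^{|σ|}−1}):
F_ε(P_0) = P_0 and F_{aρ}(P_0,…) = F_ρ(P_0,…,P_{2^{|ρ|}−1}) ◁ a ▷ F_ρ(P_{2^{|ρ|}},…). -/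
def Fseq {A : Type} : (σ : List A) → (Fin (2 ^ σ.length) → ExprU A) → ExprU A
  | [], P => P ⟨0, by positivity⟩
  | a :: ρ, P =>
      cond (Fseq ρ (fun i => P ⟨i.1, by have := i.2; simp [Nat.pow_succ]; omega⟩))
        (atom a)
        (Fseq ρ (fun i => P ⟨2 ^ ρ.length + i.1, by have := i.2; simp [Nat.pow_succ]; omega⟩))

end ExprU

namespace ExprU

/-- (CL2) with `U` as the middle condition, followed by (CP-U) on both sides. -/
lemma derClU_U_eq {A : Type} (y : ExprU A) : DerClU U (cond U y U) :=
  ((DerClU.cpu (cond T y T) (cond T y T)).symm.trans (DerClU.cl2 T y T U T T)).trans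
    ((DerClU.cpu T T).congr (DerClU.refl y) (DerClU.cpu T T))

variable {A : Type} [DecidableEq A]

lemma atoms_lred (a : A) {P : ExprU A} (hP : IsMBF P) : atoms (lred a P) ⊆ atoms P := by
  induction hP with
  | T | F | U => simp [lred]
  | @cond P Q b _ _ _ _ ihP ihQ =>
    simp only [lred]
    split_ifs <;> grind [atoms]

lemma isMBF_lred (a : A) {P : ExprU A} (hP : IsMBF P) : IsMBF (lred a P) := by
  induction hP with
  | T => exact IsMBF.T
  | F => exact IsMBF.F
  | U => exact IsMBF.U
  | @cond P Q b hP hQ hbP hbQ ihP ihQ =>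
    simp only [lred]
    split_ifs
    · assumption
    · exact IsMBF.cond b ihP ihQ (fun h => hbP (atoms_lred a hP h))
        (fun h => hbQ (atoms_lred a hQ h))

lemma shaAux_lred (a : A) {P : ExprU A} (hP : IsMBF P) (x : Finset A) :
    (shaAux P x).erase a ⊆ shaAux (lred a P) (x.erase a) := by
  induction hP generalizing x with
  | T | F | U => simp [lred, shaAux]
  | @cond P Q b _ _ _ _ ihP ihQ =>
    have h1 := ihP (x.erase b)
    have h2 := ihQ (x.erase b)
    rw [Finset.erase_right_comm] at h1 h2
    simp only [lred]
    split_ifs with h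
    · subst h
      intro c hc
      simp only [shaAux, Finset.mem_erase, Finset.mem_insert, Finset.mem_inter] at hc
      grind
    · intro c hc
      have h1c := @h1 c
      have h2c := @h2 c
      simp only [shaAux, Finset.mem_erase, Finset.mem_insert, Finset.mem_inter] at hc h1c h2c ⊢
      grind

lemma atoms_rred (a : A) {P : ExprU A} (hP : IsMBF P) : atoms (rred a P) ⊆ atoms P := by
  induction hP with
  | T | F | U => simp [rred]
  | @cond P Q b _ _ _ _ ihP ihQ =>
    simp only [rred]
    split_ifs <;> grind [atoms]

lemma isMBF_rred (a : A) {P : ExprU A} (hP : IsMBF P) : IsMBF (rred a P) := by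
  induction hP with
  | T => exact IsMBF.T
  | F => exact IsMBF.F
  | U => exact IsMBF.U
  | @cond P Q b hP hQ hbP hbQ ihP ihQ =>
    simp only [rred]
    split_ifs
    · assumption
    · exact IsMBF.cond b ihP ihQ (fun h => hbP (atoms_rred a hP h))
        (fun h => hbQ (atoms_rred a hQ h))

lemma shaAux_rred (a : A) {P : ExprU A} (hP : IsMBF P) (x : Finset A) :
    (shaAux P x).erase a ⊆ shaAux (rred a P) (x.erase a) := by
  induction hP generalizing x with
  | T | F | U => simp [rred, shaAux]
  | @cond P Q b _ _ _ _ ihP ihQ =>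
    have h1 := ihP (x.erase b)
    have h2 := ihQ (x.erase b)
    rw [Finset.erase_right_comm] at h1 h2
    simp only [rred]
    split_ifs with h
    · subst h
      intro c hc
      simp only [shaAux, Finset.mem_erase, Finset.mem_insert, Finset.mem_inter] at hc
      grind
    · intro c hc
      have h1c := @h1 c
      have h2c := @h2 c
      simp only [shaAux, Finset.mem_erase, Finset.mem_insert, Finset.mem_inter] at hc h1c h2c ⊢
      grind

/-- Shannon expansion at an atom of the shared alphabet; the set `x` is arbitrary, since `U`
expands at every atom. -/
lemma derClU_expand (a : A) {P : ExprU A} (hP : IsMBF P) (x : Finset A) (ha : a ∈ shaAux P x) :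
    DerClU P (cond (lred a P) (atom a) (rred a P)) := by
  induction hP generalizing x with
  | T | F => simp [shaAux] at ha
  | U => exact derClU_U_eq _
  | @cond P Q b _ _ _ _ ihP ihQ =>
    simp only [lred, rred]
    split_ifs with h
    · subst h
      exact DerClU.refl _
    · simp only [shaAux, Finset.mem_insert, Finset.mem_inter] at ha
      obtain ⟨haP, haQ⟩ := ha.resolve_left (Ne.symm h)
      exact ((ihP _ haP).congr (DerClU.refl _) (ihQ _ haQ)).trans (DerClU.cl2 _ _ _ _ _ _)

/-- The normal form along an arbitrary repetition-free list of atoms of `shaAux P x`. -/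
lemma exists_Fseq (σ : List A) (hσ : σ.Nodup) {P : ExprU A} (hP : IsMBF P) (x : Finset A)
    (hx : ∀ a ∈ σ, a ∈ shaAux P x) :
    ∃ Ps : Fin (2 ^ σ.length) → ExprU A, (∀ i, IsMBF (Ps i)) ∧ DerClU P (Fseq σ Ps) := by
  induction σ generalizing P x with
  | nil => exact ⟨fun _ => P, fun _ => hP, DerClU.refl P⟩
  | cons a ρ ih =>
    obtain ⟨haρ, hρ⟩ := List.nodup_cons.mp hσ
    have hmem : ∀ b ∈ ρ, b ∈ (shaAux P x).erase a := fun b hb =>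
      Finset.mem_erase.mpr ⟨fun h => haρ (h ▸ hb), hx b (List.mem_cons_of_mem a hb)⟩
    obtain ⟨L, hL, dL⟩ := ih hρ (isMBF_lred a hP) (x.erase a)
      (fun b hb => shaAux_lred a hP x (hmem b hb))
    obtain ⟨R, hR, dR⟩ := ih hρ (isMBF_rred a hP) (x.erase a)
      (fun b hb => shaAux_rred a hP x (hmem b hb))
    refine ⟨fun i => if h : i.1 < 2 ^ ρ.length then L ⟨i.1, h⟩ else
      R ⟨i.1 - 2 ^ ρ.length, by have := i.2; simp [Nat.pow_succ] at this; omega⟩, ?_, ?_⟩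
    · intro i
      dsimp only
      split_ifs
      · exact hL _
      · exact hR _
    · refine (derClU_expand a hP x (hx a List.mem_cons_self)).trans ?_
      simpa [Fseq] using dL.congr (DerClU.refl (atom a)) dR

end ExprU

open ExprU in
/-- For each three-valued mem-basic form P over A (with A strictly totally
ordered), writing σ for the enumeration of α̃(P) in increasing order, there exist
three-valued mem-basic forms P_0, …, P_{2^{|σ|}−1} such that
CP_cl^U ⊢ P = F_σ(P_0, …, P_{2^{|σ|}−1}). -/
theorem stmt_8 {A : Type} [LinearOrder A] (P : ExprU A) (hP : IsMBF P) :
    ∃ Ps : Fin (2 ^ ((sha P).sort (· ≤ ·)).length) → ExprU A,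
      (∀ i, IsMBF (Ps i)) ∧ DerClU P (Fseq ((sha P).sort (· ≤ ·)) Ps) := by
  exact exists_Fseq _ (Finset.sort_nodup _ _) hP (atoms P) (fun a ha => by simpa [sha] using ha)
end
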